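/- Let 𝒫 = {P_1, P_2} be a two-element Borel partition of X such that h_μ(𝒫) > 0. Then there exists ε > 0 such that the pair 𝑨 = (A_1, A_2) satisfies I̲_μ(𝑨) > 0 whenever A_1 ⊆ P_1 and A_2 ⊆ P_2 are Borel sets with μ(P_1 ∖ A_1) < ε and μ(P_2 ∖ A_2) < ε. -/

import Mathlib

open MeasureTheory Set
open scoped Classical ENNReal

/-- `F` is a nonempty `(K,δ)`-invariant finite subset of the group `G`. -/
def FolnerInv {G : Type*} [Group G] (K : Finset G) (δ : ℝ) (F : Finset G) : Prop :=
  F.Nonempty ∧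
    (1 - δ) * (F.card : ℝ) ≤ (((F : Set G)) ∩ {s : G | ∀ g ∈ K, g * s ∈ F}).ncard

/-- The Følner characterisation of amenability for a discrete group `G`. -/
def FolnerAmenable (G : Type*) [Group G] : Prop :=
  ∀ (K : Finset G) (δ : ℝ), 0 < δ → ∃ F : Finset G, FolnerInv K δ F

/-- The limit supremum of `ψ F / |F|` as `F` becomes more and more invariant. -/
noncomputable def invLimsup {G : Type*} [Group G] (ψ : Finset G → ℝ) : ℝ :=
  ⨅ (K : Finset G) (δ : {d : ℝ // 0 < d}),
    sSup ((fun F : Finset G => ψ F / (F.card : ℝ)) '' {F : Finset G | FolnerInv K δ.1 F})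

/-- The limit infimum of `ψ F / |F|` as `F` becomes more and more invariant. -/
noncomputable def invLiminf {G : Type*} [Group G] (ψ : Finset G → ℝ) : ℝ :=
  ⨆ (K : Finset G) (δ : {d : ℝ // 0 < d}),
    sInf ((fun F : Finset G => ψ F / (F.card : ℝ)) '' {F : Finset G | FolnerInv K δ.1 F})

/-- `J ⊆ G` is an independence set for the tuple `A` of subsets of `X` relative to the
map `D : G → Set X`. -/
def IndepRel {G X : Type*} [Group G] [MulAction G X] {k : ℕ} (A : Fin k → Set X)
    (D : G → Set X) (J : Set G) : Prop :=
  ∀ F : Finset G, (F : Set G) ⊆ J → F.Nonempty → ∀ σ : G → Fin k,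
    (⋂ s ∈ F, (D s ∩ (fun x => s • x) ⁻¹' A (σ s))).Nonempty

/-- `J ⊆ G` is an independence set for the tuple `A` relative to the subset `D ⊆ X`. -/
def IndepSet {G X : Type*} [Group G] [MulAction G X] {k : ℕ} (A : Fin k → Set X)
    (D : Set X) (J : Set G) : Prop :=
  IndepRel A (fun _ => D) J

/-- The maximum of `|F ∩ J|` over independence sets `J` for `A` relative to `D`. -/
noncomputable def maxIndep {G X : Type*} [Group G] [MulAction G X] {k : ℕ}
    (A : Fin k → Set X) (D : G → Set X) (F : Finset G) : ℕ :=
  sSup {m : ℕ | ∃ J : Set G, IndepRel A D J ∧ m = (((F : Set G)) ∩ J).ncard}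

/-- `φ_{A,δ}(F)`: the minimum over Borel sets `D` with `μ(D) ≥ 1 - δ` of the maximum
of `|F ∩ J|` over independence sets `J` for `A` relative to `D`. -/
noncomputable def phiConst {G X : Type*} [Group G] [MulAction G X] [MeasurableSpace X]
    (μ : Measure X) {k : ℕ} (A : Fin k → Set X) (δ : ℝ) (F : Finset G) : ℕ :=
  sInf {m : ℕ | ∃ D : Set X, MeasurableSet D ∧ 1 - δ ≤ (μ D).toReal ∧
    m = maxIndep A (fun _ : G => D) F}

/-- `φ'_{A,δ}(F)`: as `phiConst` but with maps `D : G → Set X` with `μ(D s) ≥ 1 - δ`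
for all `s`. -/
noncomputable def phiMap {G X : Type*} [Group G] [MulAction G X] [MeasurableSpace X]
    (μ : Measure X) {k : ℕ} (A : Fin k → Set X) (δ : ℝ) (F : Finset G) : ℕ :=
  sInf {m : ℕ | ∃ D : G → Set X, (∀ s, MeasurableSet (D s)) ∧
    (∀ s, 1 - δ ≤ (μ (D s)).toReal) ∧ m = maxIndep A D F}

/-- The upper `μ`-independence density `Ī_μ(A)` of the tuple `A`. -/
noncomputable def upperIndepDens (G : Type*) {X : Type*} [Group G] [MulAction G X]
    [MeasurableSpace X] (μ : Measure X) {k : ℕ} (A : Fin k → Set X) : ℝ :=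
  ⨆ δ : {d : ℝ // 0 < d}, invLimsup (fun F : Finset G => (phiConst μ A δ.1 F : ℝ))

/-- The lower `μ`-independence density `I̲_μ(A)` of the tuple `A`. -/
noncomputable def lowerIndepDens (G : Type*) {X : Type*} [Group G] [MulAction G X]
    [MeasurableSpace X] (μ : Measure X) {k : ℕ} (A : Fin k → Set X) : ℝ :=
  ⨆ δ : {d : ℝ // 0 < d}, invLiminf (fun F : Finset G => (phiConst μ A δ.1 F : ℝ))

/-- The measure `μ` is invariant under the action of `G`. -/
def InvariantMeasure (G : Type*) {X : Type*} [Group G] [MulAction G X] [MeasurableSpace X]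
    (μ : Measure X) : Prop :=
  ∀ (s : G) (B : Set X), MeasurableSet B → μ ((fun x => s • x) ⁻¹' B) = μ B

/-- The entropy `H_μ(𝒫^F)` of the join `⋁_{s ∈ F} s⁻¹𝒫` of the finite partition `P`. -/
noncomputable def HJoin {G X : Type*} [Group G] [MulAction G X] [MeasurableSpace X]
    (μ : Measure X) {k : ℕ} (P : Fin k → Set X) (F : Finset G) : ℝ :=
  ∑ f : ↥F → Fin k,
    Real.negMulLog (μ (⋂ s : ↥F, (fun x => (s : G) • x) ⁻¹' P (f s))).toReal

/-- `P` is a finite measurable partition of `X` (members may be empty). -/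
def IsMeasPartition {X : Type*} [MeasurableSpace X] {k : ℕ} (P : Fin k → Set X) : Prop :=
  (∀ i, MeasurableSet (P i)) ∧ (Pairwise fun i j => Disjoint (P i) (P j)) ∧
    (⋃ i, P i) = Set.univ

/-- `x` is a (topological) IE-tuple for the action of `G` on `X`. -/
def IsIETuple (G : Type*) {X : Type*} [Group G] [TopologicalSpace X] [MulAction G X]
    {k : ℕ} (x : Fin k → X) : Prop :=
  ∀ U : Fin k → Set X, (∀ i, U i ∈ nhds (x i)) →
    ∃ d : ℝ, 0 < d ∧ ∀ (K : Finset G) (δ : ℝ), 0 < δ →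
      ∃ (F : Finset G) (J : Set G), FolnerInv K δ F ∧ IndepSet U (Set.univ : Set X) J ∧
        d * (F.card : ℝ) ≤ (((F : Set G)) ∩ J).ncard

/-- `x` is a `μ`-IE-tuple. -/
def IsMuIETuple (G : Type*) {X : Type*} [Group G] [TopologicalSpace X] [MulAction G X]
    [MeasurableSpace X] (μ : Measure X) {k : ℕ} (x : Fin k → X) : Prop :=
  ∀ U : Fin k → Set X, (∀ i, U i ∈ nhds (x i)) → 0 < upperIndepDens G μ U

/-!
The entropy of the join `𝒫^F` is submodular in `F` and invariant under right translations, so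
Shearer's inequality turns the limit into an infimum: with `c = h_μ(𝒫)`, one has
`H_μ(𝒫^F) ≥ c * #F` for every nonempty finite set `F`. Consequently the points of any set `D` of
nearly full measure have exponentially many itineraries along `F`.

If `A₁ ∪ A₂` has nearly full measure, Markov's inequality allows one to shrink `D` so that each of
its points spends only a small proportion of the times in `F` outside `A₁ ∪ A₂`. There are few small
subsets of `F`, so exponentially many itineraries share the same set `b` of bad times, and the
Sauer–Shelah lemma yields a set `J ⊆ F` of positive density which these itineraries shatter.
Removing `b`, which is much smaller than `J`, leaves an independence set for `(A₁, A₂)` relative to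
`D`.
-/

section Real

open Real

lemma negMulLog_add_negMulLog {u v : ℝ} (hu : 0 ≤ u) (hv : 0 ≤ v) :
    negMulLog u + negMulLog v = negMulLog (u + v) + (u + v) * binEntropy (u / (u + v)) := by
  rcases (add_nonneg hu hv).eq_or_lt with h0 | hpos
  · obtain ⟨rfl, rfl⟩ := (add_eq_zero_iff_of_nonneg hu hv).1 h0.symm
    simp
  · have hsplit : ∀ w, negMulLog w =
        w / (u + v) * negMulLog (u + v) + (u + v) * negMulLog (w / (u + v)) := fun w => by
      rw [← negMulLog_mul, mul_div_cancel₀ w hpos.ne']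
    have hcompl : 1 - u / (u + v) = v / (u + v) := by field_simp; ring
    rw [hsplit u, hsplit v, binEntropy_eq_negMulLog_add_negMulLog_one_sub, hcompl]
    field_simp
    ring

lemma negMulLog_add_le {u v : ℝ} (hu : 0 ≤ u) (hv : 0 ≤ v) :
    negMulLog (u + v) ≤ negMulLog u + negMulLog v := by
  have huv : 0 ≤ u + v := add_nonneg hu hv
  have := mul_nonneg huv (binEntropy_nonneg (div_nonneg hu huv)
    (div_le_one_of_le₀ (le_add_of_nonneg_right hv) huv))
  linarith [negMulLog_add_negMulLog hu hv]

lemma mul_binEntropy_div_add_le {u s u' s' : ℝ} (hu : 0 ≤ u) (hus : u ≤ s) (hu' : 0 ≤ u')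
    (hus' : u' ≤ s') :
    s * binEntropy (u / s) + s' * binEntropy (u' / s') ≤
      (s + s') * binEntropy ((u + u') / (s + s')) := by
  have hs : 0 ≤ s := hu.trans hus
  have hs' : 0 ≤ s' := hu'.trans hus'
  rcases (add_nonneg hs hs').eq_or_lt with h0 | hpos
  · obtain ⟨rfl, rfl⟩ := (add_eq_zero_iff_of_nonneg hs hs').1 h0.symm
    simp
  · have hconc := strictConcave_binEntropy.concaveOn.2
      ⟨div_nonneg hu hs, div_le_one_of_le₀ hus hs⟩ ⟨div_nonneg hu' hs', div_le_one_of_le₀ hus' hs'⟩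
      (div_nonneg hs hpos.le) (div_nonneg hs' hpos.le) (by rw [← add_div, div_self hpos.ne'])
    have hmean : s / (s + s') * (u / s) + s' / (s + s') * (u' / s') = (u + u') / (s + s') := by
      rw [div_mul_eq_mul_div, div_mul_eq_mul_div, ← add_div,
        mul_div_cancel_of_imp' fun h => hu.antisymm' (hus.trans_eq h),
        mul_div_cancel_of_imp' fun h => hu'.antisymm' (hus'.trans_eq h)]
    simp only [smul_eq_mul] at hconc
    rw [hmean, div_mul_eq_mul_div, div_mul_eq_mul_div, ← add_div, div_le_iff₀ hpos] at hconc
    linarith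

lemma negMulLog_le_one_sub {p : ℝ} (hp : 0 ≤ p) : negMulLog p ≤ 1 - p := by
  rcases hp.eq_or_lt with rfl | hp
  · simp
  · have := mul_le_mul_of_nonneg_left (one_sub_inv_le_log_of_pos hp) hp.le
    rw [mul_sub, mul_inv_cancel₀ hp.ne'] at this
    rw [negMulLog]
    linarith

lemma sum_negMulLog_le {ι : Type*} (S : Finset ι) {p : ι → ℝ} (hp : ∀ i ∈ S, 0 ≤ p i) :
    ∑ i ∈ S, negMulLog (p i) ≤ negMulLog (∑ i ∈ S, p i) + (∑ i ∈ S, p i) * log S.card := by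
  rcases S.eq_empty_or_nonempty with rfl | hS
  · simp
  · have hn : (0 : ℝ) < S.card := by exact_mod_cast hS.card_pos
    have hjensen := concaveOn_negMulLog.le_map_sum (t := S) (w := fun _ => (S.card : ℝ)⁻¹) (p := p)
      (fun _ _ => by positivity) (by simp [hn.ne']) hp
    simp only [smul_eq_mul, ← Finset.mul_sum] at hjensen
    rw [negMulLog_mul, inv_mul_le_iff₀ hn] at hjensen
    refine hjensen.trans_eq ?_
    rw [negMulLog, log_inv]
    field_simp
    ring

lemma exists_forall_add_negMulLog_add_lt {c : ℝ} (hc : 0 < c) :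
    ∃ τ : ℝ, 0 < τ ∧ ∀ q : ℝ, 0 ≤ q → q ≤ τ → q + negMulLog q + q * log 2 < c := by
  have hcont : Continuous fun q : ℝ => q + negMulLog q + q * log 2 := by fun_prop
  have hzero : (fun q : ℝ => q + negMulLog q + q * log 2) 0 < c := by simpa using hc
  obtain ⟨τ, hτ, hball⟩ := Metric.eventually_nhds_iff_ball.1
    (hcont.continuousAt.eventually_lt_const hzero)
  refine ⟨τ / 2, half_pos hτ, fun q hq0 hq => hball q ?_⟩
  rw [Real.ball_eq_Ioo, Set.mem_Ioo]
  constructor <;> linarith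

end Real

section Submodular

variable {α : Type*} [DecidableEq α]

/-- Submodularity of a set function on finite sets, in the diminishing returns form: the increment
caused by adding a point decreases as the set grows. -/
def IsSubmodular (f : Finset α → ℝ) : Prop :=
  ∀ ⦃A B : Finset α⦄ ⦃a : α⦄, A ⊆ B → a ∉ B → f (insert a B) + f A ≤ f (insert a A) + f B

lemma isSubmodular_of_insert_insert {f : Finset α → ℝ}
    (h : ∀ ⦃A : Finset α⦄ ⦃a b : α⦄, a ∉ A → b ∉ A → a ≠ b →
      f (insert a (insert b A)) + f A ≤ f (insert a A) + f (insert b A)) :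
    IsSubmodular f := by
  intro A B a hAB ha
  suffices key : ∀ C : Finset α, a ∉ C ∪ A →
      f (insert a (C ∪ A)) + f A ≤ f (insert a A) + f (C ∪ A) by
    simpa only [Finset.union_eq_left.2 hAB] using key B (by rwa [Finset.union_eq_left.2 hAB])
  intro C
  induction C using Finset.induction_on with
  | empty => simp
  | insert b C _ ih =>
    intro hins
    rw [Finset.insert_union] at hins ⊢
    obtain ⟨hab, haC⟩ := not_or.1 (Finset.mem_insert.not.1 hins)
    by_cases hb : b ∈ C ∪ A
    · rw [Finset.insert_eq_of_mem hb]
      exact ih haC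
    · linarith [ih haC, h haC hb hab]

lemma IsSubmodular.shearer {f : Finset α → ℝ} (hf : IsSubmodular f) (h0 : f ∅ = 0)
    {ι : Type*} (I : Finset ι) (S : ι → Finset α) (k : ℕ) (F : Finset α)
    (hk : ∀ a ∈ F, (I.filter fun i => a ∈ S i).card = k) :
    k * f F ≤ ∑ i ∈ I, f (S i ∩ F) := by
  induction F using Finset.induction_on with
  | empty => simp [h0]
  | insert a F ha ih =>
    have hincr : k * (f (insert a F) - f F) ≤ ∑ i ∈ I, (f (S i ∩ insert a F) - f (S i ∩ F)) := by
      rw [← hk a (Finset.mem_insert_self a F), ← nsmul_eq_mul, ← Finset.sum_const,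
        Finset.sum_filter]
      refine Finset.sum_le_sum fun i _ => ?_
      split_ifs with hi
      · rw [Finset.inter_insert_of_mem hi]
        linarith [hf (Finset.inter_subset_right (s₁ := S i)) ha]
      · simp [Finset.inter_insert_of_notMem hi]
    rw [Finset.sum_sub_distrib] at hincr
    linarith [ih fun b hb => hk b (Finset.mem_insert_of_mem hb)]

end Submodular

section InvLimits

variable {G : Type*} [Group G] {ψ : Finset G → ℝ}

lemma invLimsup_le_of_forall (hψ : ∀ F, 0 ≤ ψ F) {b δ : ℝ} (hb : 0 ≤ b) (hδ : 0 < δ) (K : Finset G)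
    (h : ∀ F, FolnerInv K δ F → ψ F / F.card ≤ b) : invLimsup ψ ≤ b := by
  have hnonneg : ∀ (K : Finset G) (δ : {d : ℝ // 0 < d}),
      0 ≤ sSup ((fun F : Finset G => ψ F / F.card) '' {F | FolnerInv K δ.1 F}) := fun K δ =>
    Real.sSup_nonneg <| forall_mem_image.2 fun F _ => div_nonneg (hψ F) F.card.cast_nonneg
  calc invLimsup ψ
      ≤ ⨅ δ : {d : ℝ // 0 < d}, sSup ((fun F : Finset G => ψ F / F.card) ''
          {F | FolnerInv K δ.1 F}) :=
        ciInf_le ⟨0, forall_mem_range.2 fun K => Real.iInf_nonneg (hnonneg K)⟩ K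
    _ ≤ sSup ((fun F : Finset G => ψ F / F.card) '' {F | FolnerInv K δ F}) :=
        ciInf_le ⟨0, forall_mem_range.2 (hnonneg K)⟩ (⟨δ, hδ⟩ : {d : ℝ // 0 < d})
    _ ≤ b := Real.sSup_le (forall_mem_image.2 h) hb

variable {C : ℝ}

lemma sInf_folnerInv_le (hamen : FolnerAmenable G) (hψ : ∀ F, 0 ≤ ψ F)
    (hC : ∀ F, ψ F / F.card ≤ C) (K : Finset G) (δ : {d : ℝ // 0 < d}) :
    sInf ((fun F : Finset G => ψ F / F.card) '' {F | FolnerInv K δ.1 F}) ≤ C := by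
  obtain ⟨F, hF⟩ := hamen K δ.1 δ.2
  exact csInf_le_of_le
    ⟨0, forall_mem_image.2 fun F _ => div_nonneg (hψ F) F.card.cast_nonneg⟩ ⟨F, hF, rfl⟩ (hC F)

lemma iSup_sInf_folnerInv_le (hamen : FolnerAmenable G) (hψ : ∀ F, 0 ≤ ψ F)
    (hC : ∀ F, ψ F / F.card ≤ C) (K : Finset G) :
    ⨆ δ : {d : ℝ // 0 < d},
      sInf ((fun F : Finset G => ψ F / F.card) '' {F | FolnerInv K δ.1 F}) ≤ C :=
  have : Nonempty {d : ℝ // 0 < d} := ⟨⟨1, one_pos⟩⟩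
  ciSup_le (sInf_folnerInv_le hamen hψ hC K)

lemma invLiminf_le_of_forall (hamen : FolnerAmenable G) (hψ : ∀ F, 0 ≤ ψ F)
    (hC : ∀ F, ψ F / F.card ≤ C) : invLiminf ψ ≤ C :=
  ciSup_le (iSup_sInf_folnerInv_le hamen hψ hC)

lemma le_invLiminf_of_forall (hamen : FolnerAmenable G) (hψ : ∀ F, 0 ≤ ψ F)
    (hC : ∀ F, ψ F / F.card ≤ C) {d δ : ℝ} (hδ : 0 < δ) (K : Finset G)
    (h : ∀ F, FolnerInv K δ F → d ≤ ψ F / F.card) : d ≤ invLiminf ψ := by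
  obtain ⟨F, hF⟩ := hamen K δ hδ
  calc d ≤ sInf ((fun F : Finset G => ψ F / F.card) '' {F | FolnerInv K δ F}) :=
        le_csInf ⟨_, F, hF, rfl⟩ (forall_mem_image.2 h)
    _ ≤ ⨆ δ : {d : ℝ // 0 < d},
          sInf ((fun F : Finset G => ψ F / F.card) '' {F | FolnerInv K δ.1 F}) :=
        le_ciSup (f := fun δ : {d : ℝ // 0 < d} =>
            sInf ((fun F : Finset G => ψ F / F.card) '' {F | FolnerInv K δ.1 F}))
          ⟨C, forall_mem_range.2 (sInf_folnerInv_le hamen hψ hC K)⟩ ⟨δ, hδ⟩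
    _ ≤ invLiminf ψ :=
        le_ciSup ⟨C, forall_mem_range.2 (iSup_sInf_folnerInv_le hamen hψ hC)⟩ K

end InvLimits

section SubmodularGroup

open scoped Pointwise RightActions

variable {G : Type*} [Group G] {f : Finset G → ℝ}

lemma IsSubmodular.le_card_mul (hf : IsSubmodular f) (h0 : f ∅ = 0)
    (hinv : ∀ (E : Finset G) (g : G), f (E <• g) = f E) (F : Finset G) :
    f F ≤ F.card * f {1} := by
  induction F using Finset.induction_on with
  | empty => simp [h0]
  | insert a F ha ih =>
    have hincr := hf (Finset.empty_subset F) ha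
    have htranslate : f {a} = f {1} := by simpa using hinv {1} a
    rw [h0, insert_empty_eq, htranslate] at hincr
    rw [Finset.card_insert_of_notMem ha]
    push_cast
    linarith

lemma mem_rightTranslate_iff {E : Finset G} {a g : G} : a ∈ E <• g ↔ a * g⁻¹ ∈ E := by
  rw [← Finset.inv_smul_mem_iff]
  simp

lemma card_filter_mem_rightTranslate (E F : Finset G) {a : G} (ha : a ∈ F) :
    ((E⁻¹ * F).filter fun g => a ∈ E <• g).card = E.card := by
  refine Finset.card_nbij' (fun g => a * g⁻¹) (fun e => e⁻¹ * a) ?_ ?_ ?_ ?_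
  · intro g hg
    exact mem_rightTranslate_iff.1 (Finset.mem_filter.1 hg).2
  · intro e he
    refine Finset.mem_coe.2 (Finset.mem_filter.2
      ⟨Finset.mul_mem_mul (Finset.inv_mem_inv he) ha, mem_rightTranslate_iff.2 ?_⟩)
    simpa using he
  · simp [LeftInvOn]
  · simp [RightInvOn, LeftInvOn]

lemma sum_card_rightTranslate_inter (E F : Finset G) :
    ∑ g ∈ E⁻¹ * F, ((E <• g) ∩ F).card = E.card * F.card := by
  have hcount := Finset.sum_card_bipartiteAbove_eq_sum_card_bipartiteBelow
    (s := E⁻¹ * F) (t := F) fun g a => a ∈ E <• g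
  simp only [Finset.bipartiteAbove, Finset.bipartiteBelow, Finset.filter_mem_eq_inter,
    Finset.inter_comm F] at hcount
  rw [hcount, Finset.sum_congr rfl fun a ha => card_filter_mem_rightTranslate E F ha,
    Finset.sum_const, smul_eq_mul, mul_comm]

lemma FolnerInv.exists_rightTranslate_subset {E F : Finset G} {δ : ℝ} (hF : FolnerInv E δ F) :
    ∃ S ⊆ F, (1 - δ) * F.card ≤ S.card ∧ ∀ s ∈ S, E <• s ⊆ F := by
  refine ⟨F.filter fun s => ∀ g ∈ E, g * s ∈ F, Finset.filter_subset _ _, ?_, ?_⟩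
  · refine hF.2.trans_eq ?_
    rw [← Set.ncard_coe_finset, Finset.coe_filter]
    rfl
  · intro s hs t ht
    simpa using (Finset.mem_filter.1 hs).2 _ (mem_rightTranslate_iff.1 ht)

lemma IsSubmodular.div_card_le_of_folnerInv (hf : IsSubmodular f) (h0 : f ∅ = 0)
    (hnonneg : ∀ F, 0 ≤ f F) (hinv : ∀ (E : Finset G) (g : G), f (E <• g) = f E)
    {E F : Finset G} (hE : E.Nonempty) {δ : ℝ} (hF : FolnerInv E δ F) :
    f F / F.card ≤ f E / E.card + δ * f {1} := by
  obtain ⟨S, hSF, hScard, hS⟩ := hF.exists_rightTranslate_subset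
  obtain ⟨e, he⟩ := id hE
  have hSI : S ⊆ E⁻¹ * F := fun s hs => Finset.mem_mul.2 ⟨e⁻¹, Finset.inv_mem_inv he, e * s,
    hS s hs (mem_rightTranslate_iff.2 (by simpa using he)), by simp⟩
  have hshearer := hf.shearer h0 (E⁻¹ * F) (fun g => E <• g) E.card F
    fun a ha => card_filter_mem_rightTranslate E F ha
  have hcard : ∑ g ∈ E⁻¹ * F, (((E <• g) ∩ F).card : ℝ) = E.card * F.card := by
    exact_mod_cast sum_card_rightTranslate_inter E F
  -- The deficit `#A * f {1} - f A` is nonnegative, so only the translates inside `F` are kept.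
  have hdeficit : S.card * (E.card * f {1} - f E) ≤
      ∑ g ∈ E⁻¹ * F, ((((E <• g) ∩ F).card : ℝ) * f {1} - f ((E <• g) ∩ F)) := by
    rw [← nsmul_eq_mul, ← Finset.sum_const]
    refine (Finset.sum_le_sum fun s hs => ?_).trans (Finset.sum_le_sum_of_subset_of_nonneg hSI
      fun g _ _ => sub_nonneg.2 (hf.le_card_mul h0 hinv _))
    rw [Finset.inter_eq_left.2 (hS s hs), hinv, Finset.card_smul_finset]
  rw [Finset.sum_sub_distrib, ← Finset.sum_mul, hcard] at hdeficit
  have hn : (0 : ℝ) < F.card := by exact_mod_cast hF.1.card_pos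
  have hm : (0 : ℝ) < E.card := by exact_mod_cast hE.card_pos
  have hSle : S.card * f E ≤ F.card * f E :=
    mul_le_mul_of_nonneg_right (by exact_mod_cast Finset.card_le_card hSF) (hnonneg E)
  have hrest : ((F.card : ℝ) - S.card) * (E.card * f {1}) ≤ δ * F.card * (E.card * f {1}) :=
    mul_le_mul_of_nonneg_right (by linarith) (mul_nonneg hm.le (hnonneg _))
  rw [div_add' _ _ _ hm.ne', div_le_div_iff₀ hn hm]
  linarith

lemma IsSubmodular.invLimsup_le_div_card (hf : IsSubmodular f) (h0 : f ∅ = 0)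
    (hnonneg : ∀ F, 0 ≤ f F) (hinv : ∀ (E : Finset G) (g : G), f (E <• g) = f E)
    {E : Finset G} (hE : E.Nonempty) : invLimsup f ≤ f E / E.card := by
  refine le_of_forall_pos_le_add fun r hr => ?_
  have hden : 0 < f {1} + 1 := add_pos_of_nonneg_of_pos (hnonneg _) one_pos
  refine invLimsup_le_of_forall hnonneg
    (add_nonneg (div_nonneg (hnonneg E) E.card.cast_nonneg) hr.le) (div_pos hr hden) E
    fun F hF => (hf.div_card_le_of_folnerInv h0 hnonneg hinv hE hF).trans ?_
  have : r / (f {1} + 1) * f {1} ≤ r := by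
    rw [div_mul_eq_mul_div, div_le_iff₀ hden]
    linarith
  linarith

end SubmodularGroup

section Counting

open Real

variable {α : Type*}

/-- The subsets of `F` of density at most `η` in `F`. -/
noncomputable def smallSubsets (η : ℝ) (F : Finset α) : Finset (Finset α) :=
  F.powerset.filter fun T => (T.card : ℝ) ≤ η * F.card

lemma mem_smallSubsets {η : ℝ} {F T : Finset α} :
    T ∈ smallSubsets η F ↔ T ⊆ F ∧ (T.card : ℝ) ≤ η * F.card := by
  rw [smallSubsets, Finset.mem_filter, Finset.mem_powerset]

lemma smallSubsets_mono {η η' : ℝ} (h : η ≤ η') (F : Finset α) :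
    smallSubsets η F ⊆ smallSubsets η' F := fun T hT => by
  rw [mem_smallSubsets] at hT ⊢
  exact ⟨hT.1, hT.2.trans (by gcongr)⟩

/-- Chernoff's argument: a subset `T` of density at most `η` has weight
`exp (L * (η * #F - #T)) ≥ 1`, and the binomial theorem sums these weights over all subsets. -/
lemma card_smallSubsets_le {L : ℝ} (hL : 0 ≤ L) (η : ℝ) (F : Finset α) :
    ((smallSubsets η F).card : ℝ) ≤ exp (L * η * F.card) * (exp (-L) + 1) ^ F.card := by
  calc ((smallSubsets η F).card : ℝ)
      ≤ ∑ T ∈ F.powerset, exp (L * η * F.card) * exp (-L) ^ T.card := by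
        rw [smallSubsets, Finset.card_filter, Nat.cast_sum]
        refine Finset.sum_le_sum fun T _ => ?_
        split_ifs with hT
        · rw [Nat.cast_one, ← exp_nat_mul, ← exp_add]
          refine one_le_exp ?_
          linarith [mul_le_mul_of_nonneg_left hT hL]
        · simpa using by positivity
    _ = exp (L * η * F.card) * (exp (-L) + 1) ^ F.card := by
        rw [← Finset.mul_sum]
        simpa using Finset.sum_pow_mul_eq_add_pow (exp (-L)) 1 F

lemma exists_card_smallSubsets_le_exp (α : Type*) {κ : ℝ} (hκ : 0 < κ) :
    ∃ η : ℝ, 0 < η ∧ ∀ F : Finset α, ((smallSubsets η F).card : ℝ) ≤ exp (κ * F.card) := by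
  obtain ⟨L, hexp, hL⟩ : ∃ L : ℝ, exp (-L) ≤ κ / 2 ∧ 0 < L :=
    ((tendsto_exp_neg_atTop_nhds_zero.eventually_le_const (half_pos hκ)).and
      (Filter.eventually_gt_atTop 0)).exists
  refine ⟨κ / (2 * L), by positivity, fun F => (card_smallSubsets_le hL.le _ F).trans ?_⟩
  calc exp (L * (κ / (2 * L)) * F.card) * (exp (-L) + 1) ^ F.card
      ≤ exp (κ / 2 * F.card) * exp (κ / 2) ^ F.card := by
        have hexponent : L * (κ / (2 * L)) = κ / 2 := by field_simp
        have hbase : exp (-L) + 1 ≤ exp (κ / 2) := by linarith [add_one_le_exp (κ / 2)]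
        rw [hexponent]
        gcongr
    _ = exp (κ * F.card) := by
        rw [← exp_nat_mul, ← exp_add]
        ring_nf

lemma exists_shatters_fiber_of_mul_lt_card [DecidableEq α] {β : Type*} [DecidableEq β]
    {𝓝 𝓢 : Finset (Finset α)} {𝓑 : Finset β} {b : Finset α → β} (hb : ∀ T ∈ 𝓝, b T ∈ 𝓑)
    (hcard : 𝓑.card * 𝓢.card < 𝓝.card) :
    ∃ y ∈ 𝓑, ∃ J ∉ 𝓢, (𝓝.filter fun T => b T = y).Shatters J := by
  obtain ⟨y, hy, hfiber⟩ := Finset.exists_lt_card_fiber_of_mul_lt_card_of_maps_to hb hcard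
  obtain ⟨J, hJ, hJ𝓢⟩ := Finset.exists_mem_notMem_of_card_lt_card
    (hfiber.trans_le (Finset.card_le_card_shatterer _))
  exact ⟨y, hy, J, hJ𝓢, Finset.mem_shatterer.1 hJ⟩

end Counting

section Itineraries

variable {G X : Type*} [SMul G X] {P : Set X} {F T : Finset G} {x : X}

/-- The itinerary of `x` along `F` with respect to `{P, Pᶜ}`, encoded as the set of times `s ∈ F`
at which `s • x` lies in `P`. -/
noncomputable def visits (P : Set X) (F : Finset G) (x : X) : Finset G :=
  F.filter fun s => s • x ∈ P

lemma mem_visits {s : G} : s ∈ visits P F x ↔ s ∈ F ∧ s • x ∈ P :=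
  Finset.mem_filter

lemma visits_subset (P : Set X) (F : Finset G) (x : X) : visits P F x ⊆ F :=
  Finset.filter_subset _ _

lemma visits_empty (P : Set X) (x : X) : visits P (∅ : Finset G) x = ∅ :=
  Finset.filter_empty _

lemma visits_insert (P : Set X) (a : G) (F : Finset G) (x : X) :
    visits P (insert a F) x = if a • x ∈ P then insert a (visits P F x) else visits P F x :=
  Finset.filter_insert _ _ _

lemma preimage_visits_inter {a : G} (haF : a ∉ F) (haT : a ∉ T) :
    visits P F ⁻¹' {T} ∩ {x | a • x ∈ P} = visits P (insert a F) ⁻¹' {insert a T} := by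
  ext x
  have hax : a ∉ visits P F x := fun h => haF (visits_subset _ _ _ h)
  have hinsert : insert a (visits P F x) = insert a T ↔ visits P F x = T :=
    ⟨fun h => by rw [← Finset.erase_insert hax, h, Finset.erase_insert haT], fun h => by rw [h]⟩
  have hne : visits P F x ≠ insert a T := fun h => hax (h ▸ Finset.mem_insert_self a T)
  by_cases hx : a • x ∈ P <;> simp [visits_insert, hx, hinsert, hne]

lemma preimage_visits_diff {a : G} (haT : a ∉ T) :
    visits P F ⁻¹' {T} \ {x | a • x ∈ P} = visits P (insert a F) ⁻¹' {T} := by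
  ext x
  simp only [mem_sdiff, mem_preimage, mem_singleton_iff, mem_ofPred_eq, visits_insert]
  grind

/-- The itineraries along `F` of the points of `D`. -/
noncomputable def itineraries (P : Set X) (F : Finset G) (D : Set X) : Finset (Finset G) :=
  F.powerset.filter fun T => ∃ x ∈ D, visits P F x = T

lemma mem_itineraries {D : Set X} : T ∈ itineraries P F D ↔ ∃ x ∈ D, visits P F x = T := by
  rw [itineraries, Finset.mem_filter, Finset.mem_powerset, and_iff_right_iff_imp]
  rintro ⟨x, -, rfl⟩
  exact visits_subset _ _ _

lemma log_card_itineraries_le (P : Set X) (F : Finset G) (D : Set X) :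
    Real.log (itineraries P F D).card ≤ F.card * Real.log 2 := by
  have hcard : (itineraries P F D).card ≤ 2 ^ F.card :=
    (Finset.card_filter_le _ _).trans_eq (Finset.card_powerset F)
  rcases Nat.eq_zero_or_pos (itineraries P F D).card with h0 | hpos
  · rw [h0, Nat.cast_zero, Real.log_zero]
    positivity
  · rw [← Real.log_pow]
    exact Real.log_le_log (by exact_mod_cast hpos) (by exact_mod_cast hcard)

variable [MeasurableSpace X] [MeasurableConstSMul G X]

lemma measurableSet_preimage_visits (hP : MeasurableSet P) (F : Finset G) (𝓣 : Set (Finset G)) :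
    MeasurableSet (visits P F ⁻¹' 𝓣) := by
  induction F using Finset.induction_on generalizing 𝓣 with
  | empty => exact MeasurableSet.const (∅ ∈ 𝓣)
  | insert a F _ ih =>
    have hite : visits P (insert a F) ⁻¹' 𝓣 = ((a • ·) ⁻¹' P).ite
        (visits P F ⁻¹' (insert a ⁻¹' 𝓣)) (visits P F ⁻¹' 𝓣) := by
      ext x
      by_cases hx : a • x ∈ P <;> simp [visits_insert, Set.ite, hx]
    rw [hite]
    exact (measurable_const_smul a hP).ite (ih _) (ih _)

end Itineraries

section JoinEntropy

open Real

variable {G X : Type*} [SMul G X] [MeasurableSpace X] {P : Set X}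

/-- The entropy of the join `⋁_{s ∈ F} s⁻¹{P, Pᶜ}`, whose atoms are the fibres of the itinerary
map. -/
noncomputable def joinEntropy (μ : Measure X) (P : Set X) (F : Finset G) : ℝ :=
  ∑ T ∈ F.powerset, negMulLog (μ.real (visits P F ⁻¹' {T}))

lemma joinEntropy_empty (μ : Measure X) [IsProbabilityMeasure μ] (P : Set X) :
    joinEntropy μ P (∅ : Finset G) = 0 := by
  have huniv : visits P (∅ : Finset G) ⁻¹' {∅} = univ :=
    Set.eq_univ_of_forall fun x => visits_empty P x
  rw [joinEntropy, Finset.powerset_empty, Finset.sum_singleton, huniv, probReal_univ, negMulLog_one]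

lemma joinEntropy_nonneg (μ : Measure X) [IsProbabilityMeasure μ] (P : Set X) (F : Finset G) :
    0 ≤ joinEntropy μ P F :=
  Finset.sum_nonneg fun _ _ => negMulLog_nonneg measureReal_nonneg measureReal_le_one

lemma joinEntropy_le_add_restrict_compl (μ : Measure X) [IsFiniteMeasure μ] {D : Set X}
    (hD : MeasurableSet D) (P : Set X) (F : Finset G) :
    joinEntropy μ P F ≤ joinEntropy (μ.restrict D) P F + joinEntropy (μ.restrict Dᶜ) P F := by
  rw [joinEntropy, joinEntropy, joinEntropy, ← Finset.sum_add_distrib]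
  refine Finset.sum_le_sum fun T _ => ?_
  rw [measureReal_restrict_apply' hD, measureReal_restrict_apply' hD.compl, ← Set.sdiff_eq,
    ← measureReal_inter_add_sdiff hD]
  exact negMulLog_add_le measureReal_nonneg measureReal_nonneg

variable [MeasurableConstSMul G X]

lemma measureReal_preimage_visits_eq_add (μ : Measure X) [IsFiniteMeasure μ]
    (hP : MeasurableSet P) {a : G} {F T : Finset G} (haF : a ∉ F) (haT : a ∉ T) :
    μ.real (visits P F ⁻¹' {T}) = μ.real (visits P (insert a F) ⁻¹' {insert a T}) +
      μ.real (visits P (insert a F) ⁻¹' {T}) := by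
  rw [← preimage_visits_inter haF haT, ← preimage_visits_diff haT]
  exact (measureReal_inter_add_sdiff (measurable_const_smul a hP)).symm

lemma joinEntropy_insert (μ : Measure X) [IsFiniteMeasure μ] (hP : MeasurableSet P) {a : G}
    {F : Finset G} (ha : a ∉ F) :
    joinEntropy μ P (insert a F) = joinEntropy μ P F +
      ∑ T ∈ F.powerset, μ.real (visits P F ⁻¹' {T}) * binEntropy
        (μ.real (visits P (insert a F) ⁻¹' {insert a T}) / μ.real (visits P F ⁻¹' {T})) := by
  rw [joinEntropy, joinEntropy, Finset.sum_powerset_insert ha, ← Finset.sum_add_distrib,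
    ← Finset.sum_add_distrib]
  refine Finset.sum_congr rfl fun T hT => ?_
  rw [measureReal_preimage_visits_eq_add μ hP ha fun h => ha (Finset.mem_powerset.1 hT h), add_comm]
  exact negMulLog_add_negMulLog measureReal_nonneg measureReal_nonneg

lemma isSubmodular_joinEntropy (μ : Measure X) [IsFiniteMeasure μ] (hP : MeasurableSet P) :
    IsSubmodular (joinEntropy μ P : Finset G → ℝ) := by
  refine isSubmodular_of_insert_insert fun A a b haA hb hab => ?_
  have ha : a ∉ insert b A := by simp [hab, haA]
  have hb' : b ∉ insert a A := by simp [hab.symm, hb]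
  suffices hcond : ∑ T ∈ (insert b A).powerset, μ.real (visits P (insert b A) ⁻¹' {T}) *
        binEntropy (μ.real (visits P (insert a (insert b A)) ⁻¹' {insert a T}) /
          μ.real (visits P (insert b A) ⁻¹' {T})) ≤
      ∑ T ∈ A.powerset, μ.real (visits P A ⁻¹' {T}) *
        binEntropy (μ.real (visits P (insert a A) ⁻¹' {insert a T}) /
          μ.real (visits P A ⁻¹' {T})) by
    rw [joinEntropy_insert μ hP ha, joinEntropy_insert μ hP haA]
    linarith
  rw [Finset.sum_powerset_insert hb, ← Finset.sum_add_distrib]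
  refine Finset.sum_le_sum fun T hT => ?_
  have haT : a ∉ T := fun h => haA (Finset.mem_powerset.1 hT h)
  have hbT : b ∉ T := fun h => hb (Finset.mem_powerset.1 hT h)
  have hbaT : b ∉ insert a T := by simp [hab.symm, hbT]
  have hle : ∀ T, a ∉ T → μ.real (visits P (insert a (insert b A)) ⁻¹' {insert a T}) ≤
      μ.real (visits P (insert b A) ⁻¹' {T}) := fun T haT => by
    rw [measureReal_preimage_visits_eq_add μ hP ha haT]
    exact le_add_of_nonneg_right measureReal_nonneg
  rw [measureReal_preimage_visits_eq_add μ hP hb hbT,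
    measureReal_preimage_visits_eq_add μ hP hb' hbaT, Finset.insert_comm b a A,
    Finset.insert_comm b a T, add_comm]
  exact mul_binEntropy_div_add_le measureReal_nonneg (hle _ (by simp [hab, haT]))
    measureReal_nonneg (hle _ haT)

lemma joinEntropy_restrict_le (μ : Measure X) [IsFiniteMeasure μ] {D : Set X}
    (hP : MeasurableSet P) (hD : MeasurableSet D) (F : Finset G) :
    joinEntropy (μ.restrict D) P F ≤
      negMulLog (μ.real D) + μ.real D * log (itineraries P F D).card := by
  have hzero : ∀ T ∈ F.powerset, T ∉ itineraries P F D →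
      (μ.restrict D).real (visits P F ⁻¹' {T}) = 0 := by
    intro T _ hT
    have hempty : visits P F ⁻¹' {T} ∩ D = ∅ :=
      Set.eq_empty_of_forall_notMem fun x hx => hT (mem_itineraries.2 ⟨x, hx.2, hx.1⟩)
    rw [measureReal_restrict_apply' hD, hempty, measureReal_empty]
  have hmass : ∑ T ∈ itineraries P F D, (μ.restrict D).real (visits P F ⁻¹' {T}) = μ.real D := by
    rw [sum_measureReal_preimage_singleton _ fun T _ => measurableSet_preimage_visits hP F {T},
      measureReal_restrict_apply' hD, Set.inter_eq_right.2]
    exact fun x hx => mem_itineraries.2 ⟨x, hx, rfl⟩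
  rw [joinEntropy, ← Finset.sum_subset (Finset.filter_subset _ _ : itineraries P F D ⊆ F.powerset)
    fun T hT hTD => by rw [hzero T hT hTD, negMulLog_zero], ← hmass]
  exact sum_negMulLog_le _ fun _ _ => measureReal_nonneg

lemma joinEntropy_le_log_card_itineraries (μ : Measure X) [IsProbabilityMeasure μ] {D : Set X}
    (hP : MeasurableSet P) (hD : MeasurableSet D) (F : Finset G) :
    joinEntropy μ P F ≤ log (itineraries P F D).card +
      (μ.real Dᶜ + negMulLog (μ.real Dᶜ) + μ.real Dᶜ * (F.card * log 2)) := by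
  have hsplit := joinEntropy_le_add_restrict_compl μ hD P F
  have hinside := joinEntropy_restrict_le μ hP hD F
  have houtside := joinEntropy_restrict_le μ hP hD.compl F
  have hneg : negMulLog (μ.real D) ≤ μ.real Dᶜ := by
    rw [probReal_compl_eq_one_sub hD]
    exact negMulLog_le_one_sub measureReal_nonneg
  have hlog : μ.real D * log (itineraries P F D).card ≤ log (itineraries P F D).card :=
    mul_le_of_le_one_left (log_natCast_nonneg _) measureReal_le_one
  have hlog' : μ.real Dᶜ * log (itineraries P F Dᶜ).card ≤ μ.real Dᶜ * (F.card * log 2) :=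
    mul_le_mul_of_nonneg_left (log_card_itineraries_le P F Dᶜ) measureReal_nonneg
  linarith

lemma exp_lt_card_itineraries {μ : Measure X} [IsProbabilityMeasure μ] {D : Set X}
    (hP : MeasurableSet P) (hD : MeasurableSet D) {F : Finset G} (hF : F.Nonempty) {c h : ℝ}
    (hent : c * F.card ≤ joinEntropy μ P F)
    (hsmall : μ.real Dᶜ + negMulLog (μ.real Dᶜ) + μ.real Dᶜ * log 2 < c - h) (hh : 0 ≤ h) :
    exp (h * F.card) < (itineraries P F D).card := by
  have hn : (1 : ℝ) ≤ F.card := by exact_mod_cast hF.card_pos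
  have hq : 0 ≤ μ.real Dᶜ := measureReal_nonneg
  have hnegMulLog : 0 ≤ negMulLog (μ.real Dᶜ) := negMulLog_nonneg hq measureReal_le_one
  have hcount := joinEntropy_le_log_card_itineraries μ hP hD F
  have herror : μ.real Dᶜ + negMulLog (μ.real Dᶜ) + μ.real Dᶜ * (F.card * log 2) <
      (c - h) * F.card :=
    calc _ ≤ (μ.real Dᶜ + negMulLog (μ.real Dᶜ)) * F.card + μ.real Dᶜ * (F.card * log 2) := by
          gcongr
          exact le_mul_of_one_le_right (add_nonneg hq hnegMulLog) hn
      _ = (μ.real Dᶜ + negMulLog (μ.real Dᶜ) + μ.real Dᶜ * log 2) * F.card := by ring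
      _ < (c - h) * F.card := by gcongr
  have hlog : h * F.card < log (itineraries P F D).card := by linarith
  have hpos : (itineraries P F D).card ≠ 0 := fun h0 => by
    rw [h0, Nat.cast_zero, log_zero] at hlog
    exact hlog.not_ge (by positivity)
  exact (lt_log_iff_exp_lt (by positivity)).1 hlog

end JoinEntropy

section InvariantEntropy

open scoped Pointwise RightActions

variable {G X : Type*} [Group G] [MulAction G X]

lemma visits_rightTranslate (P : Set X) (F : Finset G) (g : G) (x : X) :
    visits P (F <• g) x = visits P F (g • x) <• g := by
  ext s
  rw [mem_rightTranslate_iff, mem_visits, mem_visits, mem_rightTranslate_iff, smul_smul,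
    inv_mul_cancel_right]

variable [MeasurableSpace X]

lemma HJoin_compl_eq_joinEntropy (μ : Measure X) (P : Set X) (F : Finset G) :
    HJoin μ ![P, Pᶜ] F = joinEntropy μ P F := by
  refine Finset.sum_nbij' (fun f => F.filter fun s => ∃ hs : s ∈ F, f ⟨s, hs⟩ = 0)
    (fun T s => if (s : G) ∈ T then 0 else 1) ?_ ?_ ?_ ?_ ?_
  · exact fun f _ => Finset.mem_powerset.2 (Finset.filter_subset _ _)
  · simp
  · intro f _
    ext s
    rcases Fin.exists_fin_two.1 ⟨f s, rfl⟩ with h | h <;> simp [h]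
  · intro T hT
    ext s
    simpa using fun hs => Finset.mem_powerset.1 hT hs
  · intro f _
    congr 3
    ext x
    simp only [mem_iInter, mem_preimage, mem_singleton_iff, visits, Finset.filter_inj',
      Subtype.forall]
    refine forall₂_congr fun s hs => ?_
    rcases Fin.exists_fin_two.1 ⟨f ⟨s, hs⟩, rfl⟩ with h | h <;> simp [h, hs]

lemma joinEntropy_rightTranslate (μ : Measure X) [SMulInvariantMeasure G X μ] (P : Set X)
    (E : Finset G) (g : G) : joinEntropy μ P (E <• g) = joinEntropy μ P E := by
  refine (Finset.sum_equiv (MulAction.toPerm (MulOpposite.op g)) (fun T => by simp)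
    fun T _ => ?_).symm
  have hfiber : visits P (E <• g) ⁻¹' {T <• g} = (g • ·) ⁻¹' (visits P E ⁻¹' {T}) := by
    ext x
    simp only [mem_preimage, mem_singleton_iff, visits_rightTranslate, smul_left_cancel_iff]
  rw [MulAction.toPerm_apply, hfiber, measureReal_def, measureReal_def, measure_preimage_smul]

lemma invLimsup_joinEntropy_mul_card_le [MeasurableConstSMul G X] (μ : Measure X)
    [IsProbabilityMeasure μ] [SMulInvariantMeasure G X μ] {P : Set X} (hP : MeasurableSet P)
    {F : Finset G} (hF : F.Nonempty) :
    invLimsup (joinEntropy μ P : Finset G → ℝ) * F.card ≤ joinEntropy μ P F := by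
  rw [← le_div_iff₀ (by exact_mod_cast hF.card_pos)]
  exact (isSubmodular_joinEntropy μ hP).invLimsup_le_div_card (joinEntropy_empty μ P)
    (joinEntropy_nonneg μ P) (joinEntropy_rightTranslate μ P) hF

end InvariantEntropy

section Recurrence

variable {G X : Type*} [SMul G X] {B : Set X} {F : Finset G}

lemma card_visits_eq_sum_indicator (B : Set X) (F : Finset G) (x : X) :
    ((visits B F x).card : ℝ) = ∑ s ∈ F, ((s • ·) ⁻¹' B).indicator 1 x := by
  rw [visits, Finset.card_filter, Nat.cast_sum]
  exact Finset.sum_congr rfl fun s _ => by simp [Set.indicator_apply]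

variable [MeasurableSpace X] [MeasurableConstSMul G X] {μ : Measure X}

lemma integrable_indicator_preimage_smul [IsFiniteMeasure μ] (hB : MeasurableSet B) (s : G) :
    Integrable (((s • ·) ⁻¹' B).indicator (1 : X → ℝ)) μ :=
  (integrable_const 1).indicator (measurable_const_smul s hB)

lemma integrable_card_visits [IsFiniteMeasure μ] (hB : MeasurableSet B) (F : Finset G) :
    Integrable (fun x => ((visits B F x).card : ℝ)) μ := by
  simp only [card_visits_eq_sum_indicator]
  exact integrable_finsetSum F fun s _ => integrable_indicator_preimage_smul hB s

variable [SMulInvariantMeasure G X μ]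

lemma integral_card_visits [IsFiniteMeasure μ] (hB : MeasurableSet B) (F : Finset G) :
    ∫ x, ((visits B F x).card : ℝ) ∂μ = F.card * μ.real B := by
  simp only [card_visits_eq_sum_indicator]
  rw [integral_finsetSum F fun s _ => integrable_indicator_preimage_smul hB s,
    ← nsmul_eq_mul, ← Finset.sum_const]
  refine Finset.sum_congr rfl fun s _ => ?_
  rw [integral_indicator_one (measurable_const_smul s hB), measureReal_def, measureReal_def,
    SMulInvariantMeasure.measure_preimage_smul s hB]

lemma mul_measureReal_preimage_visits_smallSubsets_compl_le [IsFiniteMeasure μ]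
    (hB : MeasurableSet B) (hF : F.Nonempty) {θ : ℝ} (hθ : 0 ≤ θ) :
    θ * μ.real (visits B F ⁻¹' (smallSubsets θ F : Set (Finset G)))ᶜ ≤ μ.real B := by
  have hn : (0 : ℝ) < F.card := by exact_mod_cast hF.card_pos
  have hsub : (visits B F ⁻¹' (smallSubsets θ F : Set (Finset G)))ᶜ ⊆
      {x | θ * F.card ≤ (visits B F x).card} := fun x hx => by
    by_contra hlt
    exact hx (mem_smallSubsets.2 ⟨visits_subset _ _ _, (not_le.1 hlt).le⟩)
  have hmarkov := mul_meas_ge_le_integral_of_nonneg (μ := μ)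
    (Filter.Eventually.of_forall fun x => by positivity) (integrable_card_visits hB F)
    (θ * F.card)
  rw [integral_card_visits hB] at hmarkov
  refine le_of_mul_le_mul_left ?_ hn
  calc F.card * (θ * μ.real (visits B F ⁻¹' (smallSubsets θ F : Set (Finset G)))ᶜ)
      ≤ F.card * (θ * μ.real {x | θ * F.card ≤ (visits B F x).card}) :=
        mul_le_mul_of_nonneg_left (mul_le_mul_of_nonneg_left (measureReal_mono hsub) hθ) hn.le
    _ ≤ F.card * μ.real B := by linarith

end Recurrence

section Independence

open Real

variable {G X : Type*} [Group G] [MulAction G X] {A₁ A₂ B D P : Set X} {F : Finset G}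

lemma IndepRel.mono {k : ℕ} {A : Fin k → Set X} {D D' : G → Set X} {J : Set G}
    (h : IndepRel A D J) (hD : ∀ s, D s ⊆ D' s) : IndepRel A D' J := fun E hEJ hE σ =>
  (h E hEJ hE σ).mono (iInter₂_mono fun s _ => inter_subset_inter_left _ (hD s))

lemma indepRel_sdiff_of_shatters (hA₁ : A₁ ⊆ P) (hA₂ : A₂ ⊆ Pᶜ) (hB : (A₁ ∪ A₂)ᶜ ⊆ B)
    {J b : Finset G} (hJF : J ⊆ F) {𝓝 : Finset (Finset G)} (hJ : 𝓝.Shatters J)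
    (h𝓝 : ∀ T ∈ 𝓝, ∃ x ∈ D, visits P F x = T ∧ visits B F x = b) :
    IndepRel ![A₁, A₂] (fun _ : G => D) (↑(J \ b) : Set G) := by
  intro E hE _ σ
  obtain ⟨T, hT, hJT⟩ := hJ (Finset.filter_subset (fun s => σ s = 0) J)
  obtain ⟨x, hx, rfl, rfl⟩ := h𝓝 T hT
  refine ⟨x, mem_iInter₂.2 fun s hs => ⟨hx, ?_⟩⟩
  obtain ⟨hsJ, hsb⟩ := Finset.mem_sdiff.1 (hE hs)
  have hsA : s • x ∈ A₁ ∪ A₂ := by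
    by_contra h
    exact hsb (mem_visits.2 ⟨hJF hsJ, hB h⟩)
  have hsP : s • x ∈ P ↔ σ s = 0 := by
    simpa [mem_visits, hsJ, hJF hsJ] using Finset.ext_iff.1 hJT s
  rw [mem_preimage]
  rcases Fin.exists_fin_two.1 ⟨σ s, rfl⟩ with h0 | h1
  · rw [h0]
    exact hsA.resolve_right fun h => hA₂ h (hsP.2 h0)
  · rw [h1]
    exact hsA.resolve_left fun h => by simpa [h1] using hsP.1 (hA₁ h)

lemma exists_indepRel_of_mul_lt_card_itineraries (hA₁ : A₁ ⊆ P) (hA₂ : A₂ ⊆ Pᶜ)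
    (hB : (A₁ ∪ A₂)ᶜ ⊆ B) {θ η : ℝ} (hD : ∀ x ∈ D, visits B F x ∈ smallSubsets θ F)
    (hcard : (smallSubsets θ F).card * (smallSubsets η F).card < (itineraries P F D).card) :
    ∃ J ⊆ F, IndepRel ![A₁, A₂] (fun _ : G => D) (J : Set G) ∧ (η - θ) * F.card ≤ J.card := by
  obtain ⟨S, hS⟩ := Finset.card_pos.1 (Nat.zero_lt_of_lt hcard)
  have : Nonempty X := ⟨(mem_itineraries.1 hS).choose⟩
  choose! p hp using fun (T : Finset G) (hT : T ∈ itineraries P F D) => mem_itineraries.1 hT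
  obtain ⟨b, hb, J, hJη, hJ⟩ := exists_shatters_fiber_of_mul_lt_card
    (b := fun T => visits B F (p T)) (fun T hT => hD _ (hp T hT).1) hcard
  have hJF : J ⊆ F := by
    obtain ⟨T, hT, hJT⟩ := hJ subset_rfl
    rw [← (hp T (Finset.mem_filter.1 hT).1).2] at hJT
    exact (Finset.inter_eq_left.1 hJT).trans (visits_subset _ _ _)
  refine ⟨J \ b, Finset.sdiff_subset.trans hJF,
    indepRel_sdiff_of_shatters hA₁ hA₂ hB hJF hJ fun T hT => ?_, ?_⟩
  · obtain ⟨hT𝓝, hTb⟩ := Finset.mem_filter.1 hT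
    exact ⟨p T, (hp T hT𝓝).1, (hp T hT𝓝).2, hTb⟩
  · have hJcard : η * F.card < J.card := by
      by_contra! hle
      exact hJη (mem_smallSubsets.2 ⟨hJF, hle⟩)
    have hsdiff : (J.card : ℝ) ≤ (J \ b).card + b.card := by
      exact_mod_cast Nat.sub_le_iff_le_add.1 (Finset.le_card_sdiff b J)
    linarith [(mem_smallSubsets.1 hb).2]

variable [MeasurableSpace X] [MeasurableConstSMul G X] {μ : Measure X} [IsProbabilityMeasure μ]
  [SMulInvariantMeasure G X μ]

lemma exists_indepRel_of_mul_card_le_joinEntropy (hP : MeasurableSet P) (hA₁ : A₁ ⊆ P)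
    (hA₂ : A₂ ⊆ Pᶜ) (hB : (A₁ ∪ A₂)ᶜ ⊆ B) (hBmeas : MeasurableSet B) (hF : F.Nonempty)
    {c η τ : ℝ} (hη : 0 < η)
    (hτ : ∀ q : ℝ, 0 ≤ q → q ≤ τ → q + negMulLog q + q * log 2 < c / 2)
    (hcount : ((smallSubsets η F).card : ℝ) ≤ exp (c / 4 * F.card))
    (hent : c * F.card ≤ joinEntropy μ P F) (hμB : μ.real B ≤ η / 2 * (τ / 2))
    (hD : MeasurableSet D) (hμD : μ.real Dᶜ ≤ τ / 2) :
    ∃ J ⊆ F, IndepRel ![A₁, A₂] (fun _ : G => D) (J : Set G) ∧ η / 2 * F.card ≤ J.card := by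
  have hrare : μ.real (visits B F ⁻¹' (smallSubsets (η / 2) F : Set (Finset G)))ᶜ ≤ τ / 2 :=
    le_of_mul_le_mul_left ((mul_measureReal_preimage_visits_smallSubsets_compl_le hBmeas hF
      (half_pos hη).le).trans hμB) (half_pos hη)
  set D' := D ∩ visits B F ⁻¹' (smallSubsets (η / 2) F : Set (Finset G))
  have hD' : MeasurableSet D' := hD.inter (measurableSet_preimage_visits hBmeas F _)
  have hμD' : μ.real D'ᶜ ≤ τ := by
    rw [Set.compl_inter]
    linarith [measureReal_union_le (μ := μ) Dᶜ
      (visits B F ⁻¹' (smallSubsets (η / 2) F : Set (Finset G)))ᶜ]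
  have hc : 0 ≤ c / 2 := by simpa using (hτ 0 le_rfl (measureReal_nonneg.trans hμD')).le
  have hmany : exp (c / 2 * F.card) < (itineraries P F D').card :=
    exp_lt_card_itineraries hP hD' hF hent
      (by simpa only [sub_half] using hτ _ measureReal_nonneg hμD') hc
  have hcard : (smallSubsets (η / 2) F).card * (smallSubsets η F).card <
      (itineraries P F D').card := by
    suffices ((smallSubsets (η / 2) F).card * (smallSubsets η F).card : ℝ) ≤
        exp (c / 2 * F.card) by exact_mod_cast this.trans_lt hmany
    calc ((smallSubsets (η / 2) F).card * (smallSubsets η F).card : ℝ)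
        ≤ (smallSubsets η F).card * (smallSubsets η F).card := by
          gcongr
          exact smallSubsets_mono (half_le_self hη.le) F
      _ ≤ exp (c / 4 * F.card) * exp (c / 4 * F.card) := by gcongr
      _ = exp (c / 2 * F.card) := by rw [← exp_add]; ring_nf
  obtain ⟨J, hJF, hJ, hJcard⟩ := exists_indepRel_of_mul_lt_card_itineraries hA₁ hA₂ hB
    (fun x hx => hx.2) hcard
  exact ⟨J, hJF, hJ.mono fun _ => inter_subset_left, by rwa [sub_half] at hJcard⟩

end Independence

section IndependenceDensity

variable {G X : Type*} [Group G] [MulAction G X]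

lemma card_mem_upperBounds_indepRel {k : ℕ} (A : Fin k → Set X) (D : G → Set X) (F : Finset G) :
    F.card ∈ upperBounds
      {m : ℕ | ∃ J : Set G, IndepRel A D J ∧ m = ((F : Set G) ∩ J).ncard} := by
  rintro _ ⟨J, -, rfl⟩
  rw [← Set.ncard_coe_finset F]
  exact Set.ncard_le_ncard inter_subset_left F.finite_toSet

lemma le_maxIndep {k : ℕ} {A : Fin k → Set X} {D : G → Set X} {F J : Finset G} (hJF : J ⊆ F)
    (hJ : IndepRel A D (J : Set G)) : J.card ≤ maxIndep A D F :=
  le_csSup ⟨F.card, card_mem_upperBounds_indepRel A D F⟩ ⟨J, hJ, by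
    rw [Set.inter_eq_right.2 (Finset.coe_subset.2 hJF), Set.ncard_coe_finset]⟩

variable [MeasurableSpace X] (μ : Measure X) [IsProbabilityMeasure μ]

lemma phiConst_le_card {k : ℕ} (A : Fin k → Set X) {δ : ℝ} (hδ : 0 ≤ δ) (F : Finset G) :
    phiConst μ A δ F ≤ F.card :=
  calc phiConst μ A δ F ≤ maxIndep A (fun _ : G => (univ : Set X)) F :=
        Nat.sInf_le ⟨univ, MeasurableSet.univ, by simpa using hδ, rfl⟩
    _ ≤ F.card := csSup_le' (card_mem_upperBounds_indepRel A _ F)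

lemma exists_phiConst_eq_maxIndep {k : ℕ} (A : Fin k → Set X) {δ : ℝ} (hδ : 0 ≤ δ)
    (F : Finset G) : ∃ D : Set X, MeasurableSet D ∧ 1 - δ ≤ μ.real D ∧
      phiConst μ A δ F = maxIndep A (fun _ : G => D) F :=
  Nat.sInf_mem (s := {m : ℕ | ∃ D : Set X, MeasurableSet D ∧ 1 - δ ≤ (μ D).toReal ∧
    m = maxIndep A (fun _ : G => D) F}) ⟨_, univ, MeasurableSet.univ, by simpa using hδ, rfl⟩

lemma le_lowerIndepDens (hamen : FolnerAmenable G) {k : ℕ} (A : Fin k → Set X) {d δ : ℝ}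
    (hδ : 0 < δ) (h : ∀ F : Finset G, F.Nonempty → d * F.card ≤ phiConst μ A δ F) :
    d ≤ lowerIndepDens G μ A := by
  have hle : ∀ r : {d : ℝ // 0 < d}, ∀ F : Finset G, (phiConst μ A r.1 F : ℝ) / F.card ≤ 1 :=
    fun r F => div_le_one_of_le₀ (by exact_mod_cast phiConst_le_card μ A r.2.le F)
      F.card.cast_nonneg
  calc d ≤ invLiminf fun F : Finset G => (phiConst μ A δ F : ℝ) :=
        le_invLiminf_of_forall hamen (fun _ => Nat.cast_nonneg _) (hle ⟨δ, hδ⟩) one_pos ∅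
          fun F hF => (le_div_iff₀ (by exact_mod_cast hF.1.card_pos)).2 (h F hF.1)
    _ ≤ lowerIndepDens G μ A :=
        le_ciSup (f := fun r : {d : ℝ // 0 < d} =>
            invLiminf fun F : Finset G => (phiConst μ A r.1 F : ℝ))
          ⟨1, forall_mem_range.2 fun r =>
            invLiminf_le_of_forall hamen (fun _ => Nat.cast_nonneg _) (hle r)⟩ ⟨δ, hδ⟩

lemma exists_forall_mul_card_le_phiConst [MeasurableConstSMul G X] [SMulInvariantMeasure G X μ]
    {P : Set X} (hP : MeasurableSet P) {c : ℝ} (hc : 0 < c)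
    (hent : ∀ F : Finset G, F.Nonempty → c * F.card ≤ joinEntropy μ P F) :
    ∃ ε > (0 : ℝ), ∃ δ > (0 : ℝ), ∃ d > (0 : ℝ), ∀ A₁ A₂ : Set X, A₁ ⊆ P → A₂ ⊆ Pᶜ →
      μ.real (A₁ ∪ A₂)ᶜ ≤ ε →
        ∀ F : Finset G, F.Nonempty → d * F.card ≤ phiConst μ ![A₁, A₂] δ F := by
  obtain ⟨τ, hτ, hτc⟩ := exists_forall_add_negMulLog_add_lt (half_pos hc)
  obtain ⟨η, hη, hcount⟩ := exists_card_smallSubsets_le_exp G (show 0 < c / 4 by positivity)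
  refine ⟨η / 2 * (τ / 2), by positivity, τ / 2, half_pos hτ, η / 2, half_pos hη,
    fun A₁ A₂ hA₁ hA₂ hε F hF => ?_⟩
  obtain ⟨D, hD, hμD, heq⟩ := exists_phiConst_eq_maxIndep μ ![A₁, A₂] (half_pos hτ).le F
  have hμB : μ.real (toMeasurable μ (A₁ ∪ A₂)ᶜ) ≤ η / 2 * (τ / 2) := by
    rwa [measureReal_def, measure_toMeasurable]
  have hμDc : μ.real Dᶜ ≤ τ / 2 := by
    rw [probReal_compl_eq_one_sub hD]
    linarith
  obtain ⟨J, hJF, hJ, hJcard⟩ := exists_indepRel_of_mul_card_le_joinEntropy hP hA₁ hA₂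
    (subset_toMeasurable μ _) (measurableSet_toMeasurable μ _) hF hη hτc (hcount F) (hent F hF)
    hμB hD hμDc
  rw [heq]
  exact hJcard.trans (by exact_mod_cast le_maxIndep hJF hJ)

end IndependenceDensity

theorem stmt4_general {G X : Type*} [Group G] [MulAction G X] [MeasurableSpace X]
    [MeasurableConstSMul G X] (hamen : FolnerAmenable G)
    (μ : Measure X) [IsProbabilityMeasure μ] (hinv : InvariantMeasure G μ)
    (P₁ P₂ : Set X) (hP₁ : MeasurableSet P₁)
    (hdisj : Disjoint P₁ P₂) (hcov : P₁ ∪ P₂ = Set.univ)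
    (hent : 0 < invLimsup (fun F : Finset G => HJoin μ ![P₁, P₂] F)) :
    ∃ ε : ℝ, 0 < ε ∧
      ∀ A₁ A₂ : Set X, A₁ ⊆ P₁ → A₂ ⊆ P₂ →
        (μ (P₁ \ A₁)).toReal < ε → (μ (P₂ \ A₂)).toReal < ε →
        0 < lowerIndepDens G μ ![A₁, A₂] := by
  have : SMulInvariantMeasure G X μ := ⟨fun s B hB => hinv s B hB⟩
  obtain rfl : P₂ = P₁ᶜ := (IsCompl.of_eq hdisj.eq_bot hcov).compl_eq.symm
  simp only [HJoin_compl_eq_joinEntropy] at hent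
  obtain ⟨ε, hε, δ, hδ, d, hd, hphi⟩ := exists_forall_mul_card_le_phiConst μ hP₁ hent
    fun F hF => invLimsup_joinEntropy_mul_card_le μ hP₁ hF
  refine ⟨ε / 2, half_pos hε, fun A₁ A₂ hA₁ hA₂ hε₁ hε₂ => ?_⟩
  have hcover : (A₁ ∪ A₂)ᶜ ⊆ (P₁ \ A₁) ∪ (P₁ᶜ \ A₂) := by
    intro x hx
    by_cases hxP : x ∈ P₁ <;> simp_all
  have hμA : μ.real (A₁ ∪ A₂)ᶜ ≤ ε := by
    rw [← measureReal_def] at hε₁ hε₂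
    linarith [measureReal_mono (μ := μ) hcover,
      measureReal_union_le (μ := μ) (P₁ \ A₁) (P₁ᶜ \ A₂)]
  exact hd.trans_le (le_lowerIndepDens μ hamen _ hδ (hphi A₁ A₂ hA₁ hA₂ hμA))

/-- Lemma: a two-element Borel partition with positive entropy yields pairs of subsets
with positive lower `μ`-independence density after removing small pieces. -/
theorem stmt4 {G X : Type*} [Group G] [TopologicalSpace X] [CompactSpace X] [T2Space X]
    [MulAction G X] [ContinuousConstSMul G X] [MeasurableSpace X] [BorelSpace X]
    (hamen : FolnerAmenable G)
    (μ : Measure X) [IsProbabilityMeasure μ] (hinv : InvariantMeasure G μ)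
    (P₁ P₂ : Set X) (hP₁ : MeasurableSet P₁) (hP₂ : MeasurableSet P₂)
    (hdisj : Disjoint P₁ P₂) (hcov : P₁ ∪ P₂ = Set.univ)
    (hent : 0 < invLimsup (fun F : Finset G => HJoin μ ![P₁, P₂] F)) :
    ∃ ε : ℝ, 0 < ε ∧
      ∀ A₁ A₂ : Set X, MeasurableSet A₁ → MeasurableSet A₂ → A₁ ⊆ P₁ → A₂ ⊆ P₂ →
        (μ (P₁ \ A₁)).toReal < ε → (μ (P₂ \ A₂)).toReal < ε →
        0 < lowerIndepDens G μ ![A₁, A₂] := by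
  obtain ⟨ε, hε, h⟩ := stmt4_general hamen μ hinv P₁ P₂ hP₁ hdisj hcov hent
  exact ⟨ε, hε, fun A₁ A₂ _ _ => h A₁ A₂⟩
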